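/- Energy monotonicity and a priori bounds for the nonlocal Allen–Cahn equation: the function t ↦ E^ε(t) is nonincreasing on [0,T]; moreover ε ∫₀ᵀ ∫_Q (∂ₜφ(x,t))² dx dt ≤ E^ε(0), and |λ(t)| ≤ ε^{−α/2} √(2 E^ε(0)) for every t ∈ [0,T]. -/

import Mathlib

open MeasureTheory Real Function
open scoped RealInnerProductSpace

noncomputable section

abbrev Euc (d : ℕ) := EuclideanSpace ℝ (Fin d)

/-- The double-well potential `W(s) = (1-s²)²/2`. -/
def W (s : ℝ) : ℝ := (1 - s ^ 2) ^ 2 / 2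

/-- Its derivative `W'(s) = -2s(1-s²)`. -/
def Wp (s : ℝ) : ℝ := -2 * s * (1 - s ^ 2)

/-- `k(s) = ∫₀ˢ √(2W(r)) dr`. -/
def kfun (s : ℝ) : ℝ := ∫ r in (0:ℝ)..s, Real.sqrt (2 * W r)

/-- The unit cell `Q = [0,1)^d`. -/
def Qcell (d : ℕ) : Set (Euc d) := {x | ∀ i, x i ∈ Set.Ico (0:ℝ) 1}

/-- The Laplacian (sum of second partial derivatives). -/
def lap {d : ℕ} (f : Euc d → ℝ) (x : Euc d) : ℝ :=
  ∑ i : Fin d, fderiv ℝ (fun y => fderiv ℝ f y (EuclideanSpace.single i 1)) x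
    (EuclideanSpace.single i 1)

/-- The total energy `E^ε(t) = E_S^ε(t) + E_P^ε(t)`. -/
def Eeps (d : ℕ) (ε α : ℝ) (φ : Euc d → ℝ → ℝ) (lam : ℝ → ℝ) (t : ℝ) : ℝ :=
  (∫ x in Qcell d, (ε * ‖gradient (fun y => φ y t) x‖ ^ 2 / 2 + W (φ x t) / ε)) +
    ε ^ α / 2 * lam t ^ 2

theorem Qcell_eq (d : ℕ) : Qcell d =
    (@WithLp.ofLp 2 (Fin d → ℝ)) ⁻¹' (Set.univ.pi fun _ => Set.Ico (0:ℝ) 1) := by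
  ext x; simp [Qcell]

theorem Qcell_meas (d : ℕ) : MeasurableSet (Qcell d) := by
  rw [Qcell_eq]
  exact (PiLp.volume_preserving_ofLp (Fin d)).measurable
    (MeasurableSet.univ_pi fun _ => measurableSet_Ico)

def Kcell (d : ℕ) : Set (Euc d) := (WithLp.toLp 2) '' (Set.Icc (0 : Fin d → ℝ) 1)

theorem Kcell_compact (d : ℕ) : IsCompact (Kcell d) :=
  isCompact_Icc.image (PiLp.continuous_toLp 2 _)

theorem Qcell_sub (d : ℕ) : Qcell d ⊆ Kcell d := by
  intro x hx
  exact ⟨x.ofLp, ⟨fun i => (hx i).1, fun i => (hx i).2.le⟩, rfl⟩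

theorem Qcell_fin (d : ℕ) : volume (Qcell d) < ⊤ :=
  (measure_mono (Qcell_sub d)).trans_lt (Kcell_compact d).measure_lt_top

theorem intQ {d : ℕ} {g : Euc d → ℝ} (hg : Continuous g) : IntegrableOn g (Qcell d) :=
  (hg.continuousOn.integrableOn_compact (Kcell_compact d)).mono_set (Qcell_sub d)

theorem setIntegral_Q {d : ℕ} (g : Euc d → ℝ) :
    ∫ x in Qcell d, g x = ∫ y in Set.Icc (0 : Fin d → ℝ) 1, g (WithLp.toLp 2 y) := by
  have h1 : ∫ y in (Set.univ.pi fun _ => Set.Ico (0:ℝ) 1), g (WithLp.toLp 2 y)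
      = ∫ y in Set.Icc (0 : Fin d → ℝ) 1, g (WithLp.toLp 2 y) :=
    setIntegral_congr_set (Measure.univ_pi_Ico_ae_eq_Icc (f := (0 : Fin d → ℝ)) (g := 1))
  rw [← h1, Qcell_eq]
  exact (PiLp.volume_preserving_ofLp (Fin d)).setIntegral_preimage_emb
    (MeasurableEquiv.toLp 2 (Fin d → ℝ)).symm.measurableEmbedding
    (fun y => g (WithLp.toLp 2 y)) _

theorem deriv_intQ {d : ℕ} {g g' : Euc d → ℝ → ℝ} (hg : Continuous (uncurry g))
    (hg' : Continuous (uncurry g')) (h : ∀ x t, HasDerivAt (g x) (g' x t) t) (t : ℝ) :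
    HasDerivAt (fun t => ∫ x in Qcell d, g x t) (∫ x in Qcell d, g' x t) t := by
  obtain ⟨C, hC⟩ := ((Kcell_compact d).prod (isCompact_Icc (a := t - 1) (b := t + 1))
    ).exists_bound_of_continuousOn hg'.continuousOn
  refine (hasDerivAt_integral_of_dominated_loc_of_deriv_le (F := fun t x => g x t)
    (F' := fun t x => g' x t) (bound := fun _ => C) (s := Set.Icc (t-1) (t+1))
    (Icc_mem_nhds (by linarith) (by linarith)) ?_ ?_ ?_ ?_ ?_ ?_).2
  · exact Filter.Eventually.of_forall fun s =>
      (intQ (hg.comp (by fun_prop : Continuous fun x : Euc d => (x, s)))).aestronglyMeasurable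
  · exact intQ (hg.comp (by fun_prop : Continuous fun x : Euc d => (x, t)))
  · exact (intQ (hg'.comp (by fun_prop : Continuous fun x : Euc d => (x, t)))).aestronglyMeasurable
  · refine (ae_restrict_iff' (Qcell_meas d)).2 (Filter.Eventually.of_forall fun x hx s hs => ?_)
    exact hC (x, s) ⟨Qcell_sub d hx, hs⟩
  · exact integrableOn_const (Qcell_fin d).ne
  · exact Filter.Eventually.of_forall fun x s _ => h x s

def Per {d : ℕ} (f : Euc d → ℝ) : Prop :=
  ∀ (x : Euc d) (z : Fin d → ℤ), f (x + WithLp.toLp 2 (fun i => (z i : ℝ))) = f x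

theorem div_zero_aux {n : ℕ} (f : Fin (n+1) → Euc (n+1) → ℝ) (hf : ∀ i, ContDiff ℝ 1 (f i))
    (hp : ∀ i, Per (f i)) :
    ∫ x in Qcell (n+1), ∑ i, fderiv ℝ (f i) x (EuclideanSpace.single i 1) = 0 := by
  let L : (Fin (n+1) → ℝ) →L[ℝ] Euc (n+1) :=
    ((EuclideanSpace.equiv (Fin (n+1)) ℝ).symm : (Fin (n+1) → ℝ) →L[ℝ] Euc (n+1))
  have hL : ∀ y, L y = WithLp.toLp 2 y := fun y => rfl
  rw [setIntegral_Q]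
  have := integral_divergence_of_hasFDerivAt_off_countable' (0 : Fin (n+1) → ℝ) 1
    zero_le_one (fun i y => f i (L y)) (fun i y => (fderiv ℝ (f i) (L y)).comp L) ∅
    Set.countable_empty (fun i => ((hf i).continuous.comp L.continuous).continuousOn)
    (fun y _ i => (((hf i).differentiable one_ne_zero) (L y)).hasFDerivAt.comp y L.hasFDerivAt)
    (by
      apply ContinuousOn.integrableOn_compact isCompact_Icc
      apply Continuous.continuousOn
      refine continuous_finsetSum _ fun i _ => ?_
      simp only [ContinuousLinearMap.comp_apply]
      exact (((hf i).continuous_fderiv one_ne_zero).comp L.continuous).clm_apply continuous_const)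
  simp only [ContinuousLinearMap.comp_apply] at this
  have e1 : ∀ i : Fin (n+1), L (Pi.single i 1) = EuclideanSpace.single i 1 := fun i => rfl
  simp only [e1] at this
  refine this.trans (Finset.sum_eq_zero fun i _ => ?_)
  rw [sub_eq_zero]
  refine integral_congr_ae (Filter.Eventually.of_forall fun y => ?_)
  have h2 := hp i (L (i.insertNth 0 y)) (Pi.single i 1)
  simp only [Pi.zero_apply, Pi.one_apply]
  rw [← h2]
  congr 1
  ext j
  simp only [hL, PiLp.add_apply]
  refine Fin.succAboveCases i ?_ (fun j => ?_) j <;> simp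

theorem div_zero_Q {d : ℕ} (hd : 2 ≤ d) (f : Fin d → Euc d → ℝ) (hf : ∀ i, ContDiff ℝ 1 (f i))
    (hp : ∀ i, Per (f i)) :
    ∫ x in Qcell d, ∑ i, fderiv ℝ (f i) x (EuclideanSpace.single i 1) = 0 := by
  obtain ⟨n, rfl⟩ : ∃ n, d = n + 1 := ⟨d - 1, by omega⟩
  exact div_zero_aux f hf hp

/-- directional derivative -/
def DD {d : ℕ} (w : Euc d × ℝ) (G : Euc d × ℝ → ℝ) (z : Euc d × ℝ) : ℝ := fderiv ℝ G z w

theorem DD_smooth {d : ℕ} (w : Euc d × ℝ) {G : Euc d × ℝ → ℝ} (hG : ContDiff ℝ (⊤ : ℕ∞) G) :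
    ContDiff ℝ (⊤ : ℕ∞) (DD w G) :=
  (hG.fderiv_right (m := (⊤ : ℕ∞)) (by simp)).clm_apply contDiff_const

theorem DD_symm {d : ℕ} (w u : Euc d × ℝ) {G : Euc d × ℝ → ℝ} (hG : ContDiff ℝ (⊤ : ℕ∞) G)
    (z : Euc d × ℝ) : DD w (DD u G) z = DD u (DD w G) z := by
  have hs : IsSymmSndFDerivAt ℝ G z :=
    hG.contDiffAt.isSymmSndFDerivAt (by simp; exact WithTop.coe_le_coe.2 le_top)
  have hd : DifferentiableAt ℝ (fderiv ℝ G) z :=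
    ((hG.fderiv_right (m := (⊤ : ℕ∞)) (by simp)).differentiable (by simp)) z
  have key : ∀ a b : Euc d × ℝ, DD a (DD b G) z = fderiv ℝ (fderiv ℝ G) z a b := by
    intro a b
    have := (hd.hasFDerivAt.clm_apply (hasFDerivAt_const b z)).fderiv
    unfold DD
    rw [this]; simp
  rw [key, key]; exact hs w u

theorem DD_time {d : ℕ} {G : Euc d × ℝ → ℝ} (hG : ContDiff ℝ (⊤ : ℕ∞) G) (x : Euc d) (t : ℝ) :
    HasDerivAt (fun s => G (x, s)) (DD (0,1) G (x,t)) t := by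
  have h1 := ((hG.differentiable (by simp)) (x, t)).hasFDerivAt
  have h2 : HasDerivAt (fun s : ℝ => ((x, s) : Euc d × ℝ)) (0, 1) t :=
    (hasDerivAt_const t x).prodMk (hasDerivAt_id t)
  exact h1.comp_hasDerivAt t h2

theorem DD_space {d : ℕ} {G : Euc d × ℝ → ℝ} (hG : ContDiff ℝ (⊤ : ℕ∞) G) (x : Euc d) (t : ℝ)
    (e : Euc d) : fderiv ℝ (fun y => G (y, t)) x e = DD (e, 0) G (x, t) := by
  have h1 := ((hG.differentiable (by simp)) (x, t)).hasFDerivAt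
  have h2 : HasFDerivAt (fun y : Euc d => ((y, t) : Euc d × ℝ)) _ x :=
    (hasFDerivAt_id (𝕜 := ℝ) x).prodMk (hasFDerivAt_const t x)
  have := (h1.comp x h2).fderiv
  change fderiv ℝ (G ∘ fun y => (y, t)) x e = _
  rw [this]; simp [DD]

theorem DD_per {d : ℕ} {G : Euc d × ℝ → ℝ} (w : Euc d × ℝ)
    (hp : ∀ t, Per fun x => G (x, t)) (t : ℝ) : Per fun x => DD w G (x, t) := by
  intro x z
  have h : (fun p : Euc d × ℝ => G (p + (WithLp.toLp 2 (fun i => (z i : ℝ)), 0))) = G := by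
    funext p
    obtain ⟨y, s⟩ := p
    simpa using hp s y z
  have h2 := fderiv_comp_add_right (𝕜 := ℝ) (f := G) (x := (x, t))
    (WithLp.toLp 2 (fun i => (z i : ℝ)), (0 : ℝ))
  rw [h] at h2
  simp only [DD, h2]; simp

theorem sqrt_W (s : ℝ) : Real.sqrt (2 * W s) = |1 - s ^ 2| := by
  rw [← Real.sqrt_sq_eq_abs]; congr 1; unfold W; ring

theorem sqrtW_cont : Continuous fun s => Real.sqrt (2 * W s) := by
  unfold W; fun_prop

theorem kfun_deriv (s : ℝ) : HasDerivAt kfun (Real.sqrt (2 * W s)) s :=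
  intervalIntegral.integral_hasDerivAt_right (sqrtW_cont.intervalIntegrable _ _)
    (sqrtW_cont.stronglyMeasurableAtFilter _ _) sqrtW_cont.continuousAt

theorem kfun_cont : Continuous kfun :=
  continuous_iff_continuousAt.2 fun s => (kfun_deriv s).continuousAt

theorem W_deriv (s : ℝ) : HasDerivAt W (Wp s) s := by
  have h : HasDerivAt (fun s : ℝ => (1 - s ^ 2) ^ 2 / 2) _ s :=
    (((hasDerivAt_pow 2 s).const_sub 1).pow 2).div_const 2
  refine HasDerivAt.congr_deriv (f := W) h ?_
  unfold Wp
  push_cast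
  ring

theorem grad_norm {d : ℕ} (f : Euc d → ℝ) (x : Euc d) :
    ‖gradient f x‖ ^ 2 = ∑ i, (fderiv ℝ f x (EuclideanSpace.single i 1)) ^ 2 := by
  rw [EuclideanSpace.norm_sq_eq]
  refine Finset.sum_congr rfl fun i _ => ?_
  have : gradient f x i = fderiv ℝ f x (EuclideanSpace.single i 1) := by
    rw [← inner_gradient_left, EuclideanSpace.inner_single_right]; simp
  rw [this, Real.norm_eq_abs, sq_abs]

/-- energy monotonicity and a priori bounds for the nonlocal
Allen–Cahn equation. -/
theorem stmt1 (d : ℕ) (hd : 2 ≤ d) (T ε α : ℝ) (hT : 0 < T) (hε : 0 < ε)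
    (hα : α ∈ Set.Ioo (0:ℝ) 1)
    (φ : Euc d → ℝ → ℝ)
    (hφ : ContDiff ℝ (⊤ : ℕ∞) (Function.uncurry φ))
    (hper : ∀ (x : Euc d) (z : Fin d → ℤ) (t : ℝ),
      φ (x + (WithLp.equiv 2 (Fin d → ℝ)).symm fun i => (z i : ℝ)) t = φ x t)
    (lam : ℝ → ℝ)
    (hlam : ∀ t, lam t = ε ^ (-α) *
      ((∫ x in Qcell d, kfun (φ x 0)) - (∫ x in Qcell d, kfun (φ x t))))
    (hPDE : ∀ (x : Euc d), ∀ t ∈ Set.Ioo (0:ℝ) T,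
      ε * deriv (φ x) t =
        ε * lap (fun y => φ y t) x - Wp (φ x t) / ε + lam t * Real.sqrt (2 * W (φ x t))) :
    AntitoneOn (Eeps d ε α φ lam) (Set.Icc 0 T) ∧
    ε * (∫ t in (0:ℝ)..T, ∫ x in Qcell d, (deriv (φ x) t) ^ 2) ≤ Eeps d ε α φ lam 0 ∧
    ∀ t ∈ Set.Icc (0:ℝ) T, |lam t| ≤ ε ^ (-(α / 2)) * Real.sqrt (2 * Eeps d ε α φ lam 0) := by
  set Φ : Euc d × ℝ → ℝ := uncurry φ with hΦ
  let e : Fin d → Euc d := fun i => EuclideanSpace.single i 1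
  let p : Fin d → Euc d × ℝ → ℝ := fun i => DD (e i, 0) Φ
  let v : Euc d × ℝ → ℝ := DD (0, 1) Φ
  have hps : ∀ i, ContDiff ℝ (⊤ : ℕ∞) (p i) := fun i => DD_smooth _ hφ
  have hvs : ContDiff ℝ (⊤ : ℕ∞) v := DD_smooth _ hφ
  have hΦper : ∀ t, Per fun x => Φ (x, t) := fun t x z => hper x z t
  have hφt : ∀ x t, HasDerivAt (φ x) (v (x, t)) t := fun x t => DD_time hφ x t
  have hdv : ∀ x t, deriv (φ x) t = v (x, t) := fun x t => (hφt x t).deriv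
  have hpf : ∀ i x t, fderiv ℝ (fun y => φ y t) x (e i) = p i (x, t) :=
    fun i x t => DD_space hφ x t (e i)
  have hlap : ∀ x t, lap (fun y => φ y t) x = ∑ i, DD (e i, 0) (p i) (x, t) := by
    intro x t
    unfold lap
    refine Finset.sum_congr rfl fun i _ => ?_
    rw [← DD_space (hps i) x t (e i)]
    congr 2
    funext y
    exact hpf i y t
  have hgrad : ∀ x t, ‖gradient (fun y => φ y t) x‖ ^ 2 = ∑ i, (p i (x, t)) ^ 2 := by
    intro x t
    rw [grad_norm]
    exact Finset.sum_congr rfl fun i _ => by rw [← hpf i x t]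
  have hWc : Continuous W := by unfold W; fun_prop
  have hWpc : Continuous Wp := by unfold Wp; fun_prop
  have hΦc : Continuous Φ := hφ.continuous
  have hvc : Continuous v := hvs.continuous
  have hpc : ∀ i, Continuous (p i) := fun i => (hps i).continuous
  have hptc : ∀ i, Continuous (DD (0,1) (p i)) := fun i => (DD_smooth _ (hps i)).continuous
  -- derivative of the surface energy
  have hES : ∀ t, HasDerivAt
      (fun t => ∫ x in Qcell d, (ε * ‖gradient (fun y => φ y t) x‖ ^ 2 / 2 + W (φ x t) / ε))
      (∫ x in Qcell d, (ε * (∑ i, p i (x, t) * DD (0,1) (p i) (x, t))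
        + Wp (Φ (x, t)) * v (x, t) / ε)) t := by
    intro t
    simp only [hgrad]
    refine deriv_intQ (g := fun x t => ε * (∑ i, (p i (x, t)) ^ 2) / 2 + W (φ x t) / ε)
      (g' := fun x t => ε * (∑ i, p i (x, t) * DD (0,1) (p i) (x, t))
        + Wp (Φ (x, t)) * v (x, t) / ε) ?_ ?_ ?_ t
    · have : Continuous fun z : Euc d × ℝ => ε * (∑ i, (p i z) ^ 2) / 2 + W (Φ z) / ε := by
        fun_prop
      exact this
    · have : Continuous fun z : Euc d × ℝ => ε * (∑ i, p i z * DD (0,1) (p i) z)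
          + Wp (Φ z) * v z / ε := by
        fun_prop
      exact this
    · intro x t
      have h1 : HasDerivAt (fun t => ∑ i, (p i (x, t)) ^ 2)
          (∑ i, 2 * (p i (x, t) * DD (0,1) (p i) (x, t))) t := by
        refine HasDerivAt.fun_sum fun i _ => ?_
        refine ((DD_time (hps i) x t).pow 2).congr_deriv ?_
        push_cast
        ring
      have h2 : HasDerivAt (fun t => W (φ x t)) (Wp (φ x t) * v (x, t)) t :=
        (W_deriv (φ x t)).comp t (hφt x t)
      refine (((h1.const_mul ε).div_const 2).add (h2.div_const ε)).congr_deriv ?_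
      rw [← Finset.mul_sum]
      change _ = _ + Wp (φ x t) * v (x, t) / ε
      ring
  -- derivative of lam
  have hK : ∀ t, HasDerivAt (fun t => ∫ x in Qcell d, kfun (φ x t))
      (∫ x in Qcell d, Real.sqrt (2 * W (Φ (x, t))) * v (x, t)) t := by
    intro t
    refine deriv_intQ (g := fun x t => kfun (φ x t))
      (g' := fun x t => Real.sqrt (2 * W (Φ (x, t))) * v (x, t)) ?_ ?_ ?_ t
    · exact kfun_cont.comp hΦc
    · exact (sqrtW_cont.comp hΦc).mul hvc
    · intro x t
      exact (kfun_deriv (φ x t)).comp t (hφt x t)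
  have hlamd : ∀ t, HasDerivAt lam
      (ε ^ (-α) * (-∫ x in Qcell d, Real.sqrt (2 * W (Φ (x, t))) * v (x, t))) t := by
    intro t
    have : lam = fun t => ε ^ (-α) *
      ((∫ x in Qcell d, kfun (φ x 0)) - (∫ x in Qcell d, kfun (φ x t))) := funext hlam
    rw [this]
    exact ((hK t).const_sub _).const_mul _
  have hpow : ε ^ α * ε ^ (-α) = 1 := by
    rw [← Real.rpow_add hε]; simp
  have hE : ∀ t, HasDerivAt (Eeps d ε α φ lam)
      ((∫ x in Qcell d, (ε * (∑ i, p i (x, t) * DD (0,1) (p i) (x, t))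
        + Wp (Φ (x, t)) * v (x, t) / ε)) -
        lam t * ∫ x in Qcell d, Real.sqrt (2 * W (Φ (x, t))) * v (x, t)) t := by
    intro t
    refine HasDerivAt.congr_deriv (f := Eeps d ε α φ lam)
      ((hES t).add (((hlamd t).pow 2).const_mul (ε ^ α / 2))) ?_
    push_cast
    linear_combination (- lam t * ∫ x in Qcell d, Real.sqrt (2 * W (Φ (x, t))) * v (x, t)) * hpow
  let F : ℝ → ℝ := fun t => ∫ x in Qcell d, (v (x, t)) ^ 2
  have hFc : Continuous F := by
    refine continuous_iff_continuousAt.2 fun t => ?_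
    refine (deriv_intQ (g := fun x t => (v (x, t)) ^ 2)
      (g' := fun x t => 2 * v (x, t) * DD (0,1) v (x, t)) ?_ ?_ ?_ t).continuousAt
    · exact hvc.pow 2
    · exact (continuous_const.mul hvc).mul (DD_smooth _ hvs).continuous
    · intro x t
      refine ((DD_time hvs x t).pow 2).congr_deriv ?_
      push_cast
      ring
  have hF0 : ∀ t, 0 ≤ F t := fun t => integral_nonneg fun x => sq_nonneg _
  have hE' : ∀ t ∈ Set.Ioo 0 T, HasDerivAt (Eeps d ε α φ lam) (-ε * F t) t := by
    intro t ht
    refine (hE t).congr_deriv ?_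
    have hct : Continuous fun x : Euc d => (x, t) := by fun_prop
    have hdiv := div_zero_Q hd (fun i x => p i (x, t) * v (x, t))
      (fun i => (((hps i).mul hvs).comp
        (contDiff_id.prodMk contDiff_const : ContDiff ℝ (⊤ : ℕ∞) fun x : Euc d => (x, t))).of_le
          (by exact_mod_cast le_top))
      (fun i x z => by
        have h1 := DD_per (e i, 0) hΦper t x z
        have h2 := DD_per (0, 1) hΦper t x z
        exact congrArg₂ (· * ·) h1 h2)
    have hi1 : Integrable (fun x => ε * (∑ i, p i (x, t) * DD (0,1) (p i) (x, t))
        + Wp (Φ (x, t)) * v (x, t) / ε) (volume.restrict (Qcell d)) := by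
      have : Continuous fun z : Euc d × ℝ => ε * (∑ i, p i z * DD (0,1) (p i) z)
          + Wp (Φ z) * v z / ε := by
        fun_prop
      exact intQ (this.comp hct)
    have hi2 : Integrable (fun x => lam t * (Real.sqrt (2 * W (Φ (x, t))) * v (x, t)))
        (volume.restrict (Qcell d)) :=
      intQ (continuous_const.mul (((sqrtW_cont.comp hΦc).mul hvc).comp hct))
    have hi3 : Integrable (fun x => ε * (v (x, t)) ^ 2) (volume.restrict (Qcell d)) :=
      intQ (continuous_const.mul ((hvc.pow 2).comp hct))
    have hpt : ∀ x, ∑ i, fderiv ℝ (fun x => p i (x, t) * v (x, t)) x (EuclideanSpace.single i 1)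
        = ∑ i, DD (e i, 0) (p i) (x, t) * v (x, t)
          + ∑ i, p i (x, t) * DD (0,1) (p i) (x, t) := by
      intro x
      rw [← Finset.sum_add_distrib]
      refine Finset.sum_congr rfl fun i _ => ?_
      have h1 := DD_space ((hps i).mul hvs) x t (e i)
      refine h1.trans ?_
      have hsym : DD (0,1) (p i) (x, t) = DD (e i, 0) v (x, t) := DD_symm _ _ hφ _
      rw [hsym]
      have h2 := fderiv_fun_mul ((hps i).differentiable (by simp) (x, t))
        (hvs.differentiable (by simp) (x, t))
      unfold DD at h2 ⊢
      rw [h2]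
      simp
      ring
    have hfin : (fun x => (ε * (∑ i, p i (x, t) * DD (0,1) (p i) (x, t))
        + Wp (Φ (x, t)) * v (x, t) / ε) - lam t * (Real.sqrt (2 * W (Φ (x, t))) * v (x, t))
        + ε * (v (x, t)) ^ 2) = fun x => ε * ∑ i, fderiv ℝ (fun x => p i (x, t) * v (x, t)) x
          (EuclideanSpace.single i 1) := by
      funext x
      have h := hPDE x t ht
      rw [hdv, hlap] at h
      change ε * v (x, t) = ε * _ - Wp (Φ (x, t)) / ε + lam t * Real.sqrt (2 * W (Φ (x, t))) at h
      rw [hpt, ← Finset.sum_mul]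
      linear_combination v (x, t) * h
    have hint := integral_add (hi1.sub hi2) hi3
    have hsub := integral_sub hi1 hi2
    simp only [Pi.sub_apply] at hint
    rw [hfin, integral_const_mul, hdiv, hsub, integral_const_mul, integral_const_mul] at hint
    change _ = -ε * ∫ x in Qcell d, (v (x, t)) ^ 2
    linarith
  have hcont : ContinuousOn (Eeps d ε α φ lam) (Set.Icc 0 T) :=
    fun t _ => (hE t).continuousAt.continuousWithinAt
  have hanti : AntitoneOn (Eeps d ε α φ lam) (Set.Icc 0 T) := by
    refine antitoneOn_of_deriv_nonpos (convex_Icc 0 T) hcont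
      (fun t _ => (hE t).differentiableAt.differentiableWithinAt) fun t ht => ?_
    rw [interior_Icc] at ht
    rw [(hE' t ht).deriv]
    have := mul_nonneg hε.le (hF0 t)
    linarith
  have hES0 : ∀ t, 0 ≤ ∫ x in Qcell d,
      (ε * ‖gradient (fun y => φ y t) x‖ ^ 2 / 2 + W (φ x t) / ε) := by
    intro t
    refine integral_nonneg fun x => ?_
    have : 0 ≤ W (φ x t) := by unfold W; positivity
    simp only [Pi.zero_apply]
    positivity
  have hlow : ∀ t, ε ^ α / 2 * lam t ^ 2 ≤ Eeps d ε α φ lam t := by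
    intro t
    have := hES0 t
    unfold Eeps
    linarith
  have hpos : 0 < ε ^ α := Real.rpow_pos_of_pos hε α
  refine ⟨hanti, ?_, ?_⟩
  · have hftc := intervalIntegral.integral_eq_sub_of_hasDerivAt_of_le hT.le hcont hE'
      ((continuous_const.mul hFc).intervalIntegrable 0 T)
    rw [intervalIntegral.integral_const_mul] at hftc
    simp only [hdv]
    change ε * (∫ t in (0:ℝ)..T, F t) ≤ _
    have h1 := hlow T
    have h2 : 0 ≤ ε ^ α / 2 * lam T ^ 2 := by positivity
    linarith
  · intro t ht
    have h1 := (hlow t).trans (hanti ⟨le_rfl, hT.le⟩ ht ht.1)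
    have h2 : (ε ^ (-(α / 2))) ^ 2 = ε ^ (-α) := by
      rw [← Real.rpow_natCast, ← Real.rpow_mul hε.le]
      congr 1
      push_cast
      ring
    have h3 : 0 < ε ^ (-(α / 2)) := Real.rpow_pos_of_pos hε _
    have h4 : 0 < ε ^ (-α) := Real.rpow_pos_of_pos hε _
    have hE0 : 0 ≤ Eeps d ε α φ lam 0 := le_trans (by positivity) h1
    refine abs_le_of_sq_le_sq ?_ (by positivity)
    rw [mul_pow, h2, Real.sq_sqrt (by positivity)]
    have h5 := mul_le_mul_of_nonneg_left h1 h4.le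
    have h6 : ε ^ (-α) * (ε ^ α / 2 * lam t ^ 2) = lam t ^ 2 / 2 := by
      linear_combination (lam t ^ 2 / 2) * hpow
    linarith
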